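/- arXiv:1105.1798 — 2 statements merged into one kernel-verified Lean document; each statement's English description precedes it below -/
import Mathlib

section
/- Let α > −1 and let M : [0,1] → ℝ be twice continuously differentiable with M(r) > 0 for all r ∈ [0,1] and M(1) = 1. For n ≥ 1 define C₁(n) = ∫₀¹ r^{2n+2} [ (1−M(r))(1−r²)^α ]′ dr, C₂(n) = ∫₀¹ r^{2n} [ M(r)(1−r²)^{α+1} ]′ dr, and A(n) = (∫₀¹ r^{2n+1} M(r)(1−r²)^α dr)·(∫₀¹ r^{2n−1} M(r)(1−r²)^α dr), where ′ denotes d/dr. Then lim_{n→∞} C₁(n)C₂(n)/A(n) = 2(α+1)² M′(1). -/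
/-!
Differentiating on `(0,1)` gives
`[(1−M)(1−r²)^α]′ = h₁(r)(1−r²)^α` and `[M(1−r²)^{α+1}]′ = h₂(r)(1−r²)^α`, where
`h₁ = −M′ − 2αr q/(1+r)`, `h₂ = (1−r²)M′ − 2(α+1)rM`, and `q(r) = (M(r)−1)/(r−1)` is the slope of
`M` at `1`, continued by `q(1) = M′(1)`. Both `h₁` and `h₂` are continuous on `[0,1]`, with
`h₁(1) = −(α+1)M′(1)` and `h₂(1) = −2(α+1)`.

The measures proportional to `r^k (1−r²)^α dr` on `(0,1)` concentrate at `r = 1` as `k → ∞`, so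
`∫ r^k h (1−r²)^α / ∫ r^k M (1−r²)^α → h(1)/M(1) = h(1)` for every continuous `h`
(`tendsto_ratio`). Writing `r^{2n+2} = r^{2n+1}·r` and `r^{2n} = r^{2n−1}·r`, each `C_i(n)` is paired
with one factor of `A(n)`, and the limit is `h₁(1) h₂(1) = 2(α+1)² M′(1)`. No integration by parts
is needed.
-/

open Set Filter Topology MeasureTheory

lemma integrableOn_one_sub_sq_rpow {α : ℝ} (hα : -1 < α) :
    IntegrableOn (fun r : ℝ => (1 - r ^ 2) ^ α) (Ioo 0 1) := by
  have h1 : IntervalIntegrable (fun x : ℝ => (1 - x) ^ α) volume 0 1 := by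
    have := (intervalIntegral.intervalIntegrable_rpow' (a := 0) (b := 1) hα).comp_sub_left 1
    simpa using this.symm
  have h2 : IntegrableOn (fun x : ℝ => (1 - x) ^ α * (1 + x) ^ α) (Icc 0 1) := by
    rw [intervalIntegrable_iff_integrableOn_Icc_of_le zero_le_one] at h1
    refine h1.mul_continuousOn ?_ isCompact_Icc
    refine ContinuousOn.rpow_const (by fun_prop) fun x hx => Or.inl ?_
    have := hx.1
    positivity
  refine (h2.mono_set Ioo_subset_Icc_self).congr_fun (fun x hx => ?_) measurableSet_Ioo
  have h3 : 0 ≤ 1 - x := by linarith [hx.2]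
  have h4 : 0 ≤ 1 + x := by linarith [hx.1]
  dsimp only
  rw [← Real.mul_rpow h3 h4]
  ring_nf

/-- Suitably normalised, the measures `r ^ k (1 - r²) ^ α dr` on `(0,1)` concentrate at
`1`; the normalising constants `a k` are left unspecified, as only quotients are used. -/
lemma exists_normalisation {α : ℝ} (hα : -1 < α) :
    ∃ a : ℕ → ℝ, ∀ h : ℝ → ℝ, ContinuousOn h (Icc 0 1) →
      Tendsto (fun k : ℕ => a k * ∫ r in Ioo (0:ℝ) 1, r ^ k * (h r * (1 - r ^ 2) ^ α))
        atTop (𝓝 (h 1)) := by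
  let d : ℝ → ENNReal := fun r => ENNReal.ofReal ((1 - r ^ 2) ^ α)
  let μ : Measure ℝ := (volume.restrict (Ioo (0:ℝ) 1)).withDensity d
  have hd : Measurable d := by fun_prop
  have hfin : IsFiniteMeasure μ :=
    isFiniteMeasure_withDensity_ofReal (integrableOn_one_sub_sq_rpow hα).2
  have hμ : ∀ u, IsOpen u → (1:ℝ) ∈ u → 0 < μ (u ∩ Icc 0 1) := by
    intro u hu h1
    rw [pos_iff_ne_zero]
    intro h0
    rw [withDensity_apply_eq_zero hd,
      Measure.restrict_apply' measurableSet_Ioo] at h0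
    have hne : (u ∩ Ioo (0:ℝ) 1).Nonempty := by
      refine mem_closure_iff.1 ?_ u hu h1
      rw [closure_Ioo zero_ne_one]
      exact right_mem_Icc.2 zero_le_one
    refine ((hu.inter isOpen_Ioo).measure_pos volume hne).ne' (measure_mono_null ?_ h0)
    rintro x ⟨hxu, hx⟩
    refine ⟨⟨?_, hxu, Ioo_subset_Icc_self hx⟩, hx⟩
    have : 0 < (1 - x ^ 2) ^ α := Real.rpow_pos_of_pos (by nlinarith [hx.1, hx.2]) _
    simpa [d] using this
  refine ⟨fun k => (∫ x in Icc (0:ℝ) 1, x ^ k ∂μ)⁻¹, fun h hh => ?_⟩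
  have key := tendsto_setIntegral_pow_smul_of_unique_maximum_of_isCompact_of_measure_nhdsWithin_pos
    (μ := μ) (x₀ := (1:ℝ)) (g := h) isCompact_Icc hμ (c := fun x => x) continuousOn_id
    (fun y hy hne => lt_of_le_of_ne hy.2 hne) (fun x hx => hx.1) one_pos
    (right_mem_Icc.2 zero_le_one) (hh.integrableOn_compact isCompact_Icc)
    (hh 1 (right_mem_Icc.2 zero_le_one))
  refine key.congr fun k => ?_
  rw [smul_eq_mul]
  congr 1
  rw [setIntegral_withDensity_eq_setIntegral_toReal_smul hd (by simp [d]) _ measurableSet_Icc,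
    Measure.restrict_restrict measurableSet_Icc, inter_eq_self_of_subset_right Ioo_subset_Icc_self]
  refine setIntegral_congr_fun measurableSet_Ioo fun x hx => ?_
  have : 0 < (1 - x ^ 2) ^ α := Real.rpow_pos_of_pos (by nlinarith [hx.1, hx.2]) _
  simp only [d, smul_eq_mul, ENNReal.toReal_ofReal this.le]
  ring

lemma tendsto_ratio {α : ℝ} (hα : -1 < α) {h m : ℝ → ℝ} (hh : ContinuousOn h (Icc 0 1))
    (hm : ContinuousOn m (Icc 0 1)) (hm1 : m 1 = 1) :
    Tendsto (fun k : ℕ => (∫ r in Ioo (0:ℝ) 1, r ^ k * (h r * (1 - r ^ 2) ^ α)) /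
      ∫ r in Ioo (0:ℝ) 1, r ^ k * (m r * (1 - r ^ 2) ^ α)) atTop (𝓝 (h 1)) := by
  obtain ⟨a, ha⟩ := exists_normalisation hα
  have h1 := ha h hh
  have h2 := ha m hm
  rw [hm1] at h2
  have h3 := h1.div h2 one_ne_zero
  rw [div_one] at h3
  refine h3.congr' ?_
  -- Since `a k` times the denominator tends to `1`, eventually `a k ≠ 0` and it cancels.
  filter_upwards [h2.eventually_ne one_ne_zero] with k hk
  exact mul_div_mul_left _ _ (left_ne_zero_of_mul hk)

lemma hasDerivAt_one_sub_sq_rpow (β : ℝ) {r : ℝ} (hr : r ∈ Ioo (0:ℝ) 1) :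
    HasDerivAt (fun s : ℝ => (1 - s ^ 2) ^ β) (-(2 * r) * β * (1 - r ^ 2) ^ (β - 1)) r := by
  have h0 : (1 - r ^ 2) ≠ 0 := by nlinarith [hr.1, hr.2]
  have h1 : HasDerivAt (fun s : ℝ => 1 - s ^ 2) (-(2 * r)) r := by
    simpa using (hasDerivAt_pow 2 r).const_sub 1
  exact h1.rpow_const (Or.inl h0)

/-- The slope of `M` at `1`, continued to `r = 1` by the one-sided derivative there. -/
noncomputable def slopeAtOne (M : ℝ → ℝ) : ℝ → ℝ :=
  Function.update (slope M 1) 1 (derivWithin M (Icc 0 1) 1)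

lemma continuousOn_slopeAtOne {M : ℝ → ℝ} (hM : DifferentiableOn ℝ M (Icc 0 1)) :
    ContinuousOn (slopeAtOne M) (Icc 0 1) := by
  refine continuousOn_update_iff.2 ⟨?_, fun h1 => ?_⟩
  · have hs : ContinuousOn (fun r => (r - 1)⁻¹ * (M r - M 1)) (Icc 0 1 \ {1}) := by
      refine ContinuousOn.mul (ContinuousOn.inv₀ (by fun_prop) fun x hx => ?_) ?_
      · exact sub_ne_zero.2 hx.2
      · exact (hM.continuousOn.mono sdiff_subset).sub continuousOn_const
    exact hs.congr fun r _ => by simp [slope_def_field, div_eq_inv_mul]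
  · exact hasDerivWithinAt_iff_tendsto_slope.1 (hM 1 h1).hasDerivWithinAt

lemma one_sub_eq_slopeAtOne {M : ℝ → ℝ} (hM1 : M 1 = 1) {r : ℝ} (hr : r ≠ 1) :
    1 - M r = slopeAtOne M r * (1 - r) := by
  have : r - 1 ≠ 0 := sub_ne_zero.2 hr
  rw [slopeAtOne, Function.update_of_ne hr, slope_def_field, hM1]
  field_simp
  ring

lemma derivWithin_first {α : ℝ} {M : ℝ → ℝ} (hM : DifferentiableOn ℝ M (Icc 0 1))
    (hM1 : M 1 = 1) {r : ℝ} (hr : r ∈ Ioo (0:ℝ) 1) :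
    derivWithin (fun s => (1 - M s) * (1 - s ^ 2) ^ α) (Icc 0 1) r =
      (-derivWithin M (Icc 0 1) r - 2 * α * r * slopeAtOne M r / (1 + r)) * (1 - r ^ 2) ^ α := by
  have hr' := Ioo_subset_Icc_self hr
  have hd := ((hM r hr').hasDerivWithinAt.const_sub 1).mul
    (hasDerivAt_one_sub_sq_rpow α hr).hasDerivWithinAt
  have hpos : 0 < 1 - r ^ 2 := by nlinarith [hr.1, hr.2]
  have h1r : 1 + r ≠ 0 := by linarith [hr.1]
  have hfac : (1 - r ^ 2) ^ α = (1 - r ^ 2) ^ (α - 1) * ((1 - r) * (1 + r)) := by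
    rw [Real.rpow_sub_one hpos.ne', show (1 - r) * (1 + r) = 1 - r ^ 2 by ring,
      div_mul_cancel₀ _ hpos.ne']
  refine (hd.derivWithin (uniqueDiffOn_Icc_zero_one r hr')).trans ?_
  rw [one_sub_eq_slopeAtOne hM1 hr.2.ne, hfac]
  field_simp
  ring

lemma derivWithin_second {α : ℝ} {M : ℝ → ℝ} (hM : DifferentiableOn ℝ M (Icc 0 1))
    {r : ℝ} (hr : r ∈ Ioo (0:ℝ) 1) :
    derivWithin (fun s => M s * (1 - s ^ 2) ^ (α + 1)) (Icc 0 1) r =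
      ((1 - r ^ 2) * derivWithin M (Icc 0 1) r - 2 * (α + 1) * r * M r) * (1 - r ^ 2) ^ α := by
  have hr' := Ioo_subset_Icc_self hr
  have hd := (hM r hr').hasDerivWithinAt.mul
    (hasDerivAt_one_sub_sq_rpow (α + 1) hr).hasDerivWithinAt
  have hpos : 0 < 1 - r ^ 2 := by nlinarith [hr.1, hr.2]
  refine (hd.derivWithin (uniqueDiffOn_Icc_zero_one r hr')).trans ?_
  rw [add_sub_cancel_right, Real.rpow_add_one hpos.ne']
  ring

/-- `lim_{n→∞} C₁(n)C₂(n)/A(n) = 2(α+1)² M′(1)`, where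
`C₁(n) = ∫₀¹ r^{2n+2} [(1−M(r))(1−r²)^α]′ dr`,
`C₂(n) = ∫₀¹ r^{2n} [M(r)(1−r²)^{α+1}]′ dr`, and
`A(n) = (∫₀¹ r^{2n+1} M(r)(1−r²)^α dr)·(∫₀¹ r^{2n−1} M(r)(1−r²)^α dr)`. -/
theorem stmt11 (α : ℝ) (hα : -1 < α) (M : ℝ → ℝ)
    (hM : ContDiffOn ℝ 2 M (Set.Icc 0 1))
    (hMpos : ∀ r ∈ Set.Icc (0:ℝ) 1, 0 < M r) (hM1 : M 1 = 1) :
    Filter.Tendsto (fun n : ℕ =>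
      ((∫ r in Set.Ioo (0:ℝ) 1, r ^ (2 * n + 2) *
          derivWithin (fun s => (1 - M s) * (1 - s ^ 2) ^ α) (Set.Icc 0 1) r) *
       (∫ r in Set.Ioo (0:ℝ) 1, r ^ (2 * n) *
          derivWithin (fun s => M s * (1 - s ^ 2) ^ (α + 1)) (Set.Icc 0 1) r)) /
      ((∫ r in Set.Ioo (0:ℝ) 1, r ^ (2 * n + 1) * (M r * (1 - r ^ 2) ^ α)) *
       (∫ r in Set.Ioo (0:ℝ) 1, r ^ (2 * n - 1) * (M r * (1 - r ^ 2) ^ α))))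
      Filter.atTop (nhds (2 * (α + 1) ^ 2 * derivWithin M (Set.Icc 0 1) 1)) := by
  have hd : DifferentiableOn ℝ M (Icc 0 1) := hM.differentiableOn (by norm_num)
  have hc : ContinuousOn M (Icc 0 1) := hM.continuousOn
  have hc' : ContinuousOn (derivWithin M (Icc 0 1)) (Icc 0 1) :=
    hM.continuousOn_derivWithin uniqueDiffOn_Icc_zero_one (by norm_num)
  have hq := continuousOn_slopeAtOne hd
  have hq1 : slopeAtOne M 1 = derivWithin M (Icc 0 1) 1 := Function.update_self ..
  -- The extra factor `r` lowers the exponents `2n+2`, `2n` of `C₁`, `C₂` to those in `A`.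
  have c1 : ContinuousOn (fun r => r * (-derivWithin M (Icc 0 1) r -
      2 * α * r * slopeAtOne M r / (1 + r))) (Icc 0 1) := by
    refine continuousOn_id.mul (hc'.neg.sub (ContinuousOn.div (by fun_prop) (by fun_prop) ?_))
    intro x hx
    linarith [hx.1]
  have c2 : ContinuousOn (fun r => r * ((1 - r ^ 2) * derivWithin M (Icc 0 1) r -
      2 * (α + 1) * r * M r)) (Icc 0 1) := by fun_prop
  have e1 : Tendsto (fun n : ℕ => 2 * n + 1) atTop atTop :=
    tendsto_atTop_mono (fun n => by simp only [id]; omega) tendsto_id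
  have e2 : Tendsto (fun n : ℕ => 2 * n - 1) atTop atTop :=
    tendsto_atTop_mono (fun n => by simp only [id]; omega) tendsto_id
  have t := ((tendsto_ratio hα c1 hc hM1).comp e1).mul ((tendsto_ratio hα c2 hc hM1).comp e2)
  have hlim : (1 * (-derivWithin M (Icc 0 1) 1 - 2 * α * 1 * slopeAtOne M 1 / (1 + 1))) *
      (1 * ((1 - 1 ^ 2) * derivWithin M (Icc 0 1) 1 - 2 * (α + 1) * 1 * M 1)) =
      2 * (α + 1) ^ 2 * derivWithin M (Icc 0 1) 1 := by
    rw [hq1, hM1]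
    ring
  rw [← hlim]
  refine t.congr' ?_
  filter_upwards [eventually_ge_atTop 1] with n hn
  simp only [Function.comp_apply]
  rw [div_mul_div_comm]
  congr 2
  · refine setIntegral_congr_fun measurableSet_Ioo fun r hr => ?_
    simp only [derivWithin_first hd hM1 hr]
    ring
  · refine setIntegral_congr_fun measurableSet_Ioo fun r hr => ?_
    simp only [derivWithin_second hd hr]
    obtain ⟨k, rfl⟩ : ∃ k, n = k + 1 := ⟨n - 1, by omega⟩
    rw [show 2 * (k + 1) - 1 = 2 * k + 1 by omega]
    ring
end

section
/- Let α > −1 and let M : [0,1] → ℝ be twice continuously differentiable with M(r) > 0 for all r ∈ [0,1] and M(1) = 1. For n ≥ 1 define C₃(n) = ∫₀¹ r^{2n+1} [ (1−M(r))(1−r²)^{α+1} ]″ dr, C₄(n) = ∫₀¹ r^{2n+1} M(r)(1−r²)^α dr, and A(n) = (∫₀¹ r^{2n+1} M(r)(1−r²)^α dr)·(∫₀¹ r^{2n−1} M(r)(1−r²)^α dr), where ″ denotes d²/dr². Then lim_{n→∞} C₃(n)C₄(n)/A(n) = 2(α+2)(α+1) M′(1). -/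
/-!
On `(0,1)` the second derivative `[(1-M)(1-r²)^{α+1}]″` factors as `(1-r²)^α · h(r)`, where `h`
(`secondDerivFactor`) extends continuously to `[0,1]`: the only delicate term contains
`(1-M(r))/(1-r²)`, which tends to `M'(1)/2` as `r → 1` because `M(1) = 1`. Its boundary value is
`h(1) = 4(α+1)M'(1) + 2α(α+1)M'(1) = 2(α+2)(α+1)M'(1)`.

The factor `C₄(n) > 0` cancels, so with the integrable weight `w = M(1-r²)^α` the quotient is
`∫ r^{2n-1} w g / ∫ r^{2n-1} w` for `g = r² h / M`. The probability densities proportional to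
`r^{2n-1} w` concentrate at `r = 1` (`tendsto_pow_weight_average`), so the limit is
`g(1) = h(1)`.
-/

open Set Filter Topology MeasureTheory

lemma pow_weight_integral_pos {w : ℝ → ℝ} (hw : IntegrableOn w (Ioo 0 1))
    (hpos : ∀ r ∈ Ioo (0:ℝ) 1, 0 < w r) (n : ℕ) :
    0 < ∫ r in Ioo (0:ℝ) 1, r ^ n * w r := by
  have hint : IntegrableOn (fun r => r ^ n * w r) (Ioo (0:ℝ) 1) := by
    refine Integrable.bdd_mul (c := 1) hw (by fun_prop) ?_
    refine (ae_restrict_iff' measurableSet_Ioo).2 (ae_of_all _ fun r hr => ?_)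
    rw [norm_pow, Real.norm_of_nonneg hr.1.le]
    exact pow_le_one₀ hr.1.le hr.2.le
  have hp : ∀ r ∈ Ioo (0:ℝ) 1, 0 < r ^ n * w r := fun r hr =>
    mul_pos (pow_pos hr.1 n) (hpos r hr)
  rw [setIntegral_pos_iff_support_of_nonneg_ae _ hint]
  · have : Function.support (fun r => r ^ n * w r) ∩ Ioo (0:ℝ) 1 = Ioo 0 1 :=
      inter_eq_right.2 fun r hr => (hp r hr).ne'
    rw [this]
    simp
  · exact (ae_restrict_iff' measurableSet_Ioo).2 (ae_of_all _ fun r hr => (hp r hr).le)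

/-- The averages of `g` against the densities proportional to `r ^ n * w r` tend to `g 1`: these
are peak functions at `1` for the finite measure on `(0,1)` with density `w`. -/
lemma tendsto_pow_weight_average {w g : ℝ → ℝ} (hw : IntegrableOn w (Ioo 0 1))
    (hpos : ∀ r ∈ Ioo (0:ℝ) 1, 0 < w r) (hg : ContinuousOn g (Icc 0 1)) :
    Tendsto (fun n : ℕ => (∫ r in Ioo (0:ℝ) 1, r ^ n * (w r * g r)) /
      ∫ r in Ioo (0:ℝ) 1, r ^ n * w r) atTop (𝓝 (g 1)) := by
  set μ := (volume.restrict (Ioo (0:ℝ) 1)).withDensity (fun r => ENNReal.ofReal (w r)) with hμ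
  have hae : AEMeasurable (fun r => ENNReal.ofReal (w r)) (volume.restrict (Ioo (0:ℝ) 1)) :=
    hw.aestronglyMeasurable.aemeasurable.ennreal_ofReal
  have : IsFiniteMeasure μ := isFiniteMeasure_withDensity_ofReal hw.2
  have hrest : μ.restrict (Icc 0 1) = μ := by
    rw [hμ, restrict_withDensity measurableSet_Icc, Measure.restrict_restrict measurableSet_Icc,
      inter_eq_right.2 Ioo_subset_Icc_self]
  have hintegral : ∀ f : ℝ → ℝ, ∫ r in Icc (0:ℝ) 1, f r ∂μ = ∫ r in Ioo (0:ℝ) 1, w r * f r := by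
    intro f
    rw [hrest, hμ, integral_withDensity_eq_integral_toReal_smul₀ hae (by simp)]
    refine setIntegral_congr_fun measurableSet_Ioo fun r hr => ?_
    simp [ENNReal.toReal_ofReal (hpos r hr).le]
  have key := tendsto_setIntegral_pow_smul_of_unique_maximum_of_isCompact_of_measure_nhdsWithin_pos
    (μ := μ) (s := Icc (0:ℝ) 1) (x₀ := 1) (c := fun x => x) (g := g) isCompact_Icc ?_
    continuousOn_id (fun y hy hne => lt_of_le_of_ne hy.2 hne) (fun x hx => hx.1) one_pos
    (by simp) (hg.integrableOn_compact isCompact_Icc) (hg 1 (by simp))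
  · refine key.congr fun n => ?_
    simp only [hintegral, smul_eq_mul]
    rw [div_eq_inv_mul]
    simp only [mul_left_comm, mul_comm, mul_assoc]
  · intro u hu h1
    rw [pos_iff_ne_zero, hμ, Ne, withDensity_apply_eq_zero' hae]
    have hopen : IsOpen (u ∩ Ioo (0:ℝ) 1) := hu.inter isOpen_Ioo
    have hne : (u ∩ Ioo (0:ℝ) 1).Nonempty := by
      have : u ∩ Ioo (0:ℝ) 1 ∈ 𝓝[<] (1:ℝ) :=
        inter_mem (mem_nhdsWithin_of_mem_nhds (hu.mem_nhds h1)) (Ioo_mem_nhdsLT zero_lt_one)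
      exact Filter.nonempty_of_mem this
    intro h0
    refine (hopen.measure_pos volume hne).ne' (le_antisymm ?_ bot_le)
    have hle := Measure.le_restrict_apply (μ := volume) (Ioo (0:ℝ) 1)
      ({x | ENNReal.ofReal (w x) ≠ 0} ∩ (u ∩ Icc 0 1))
    rw [h0] at hle
    refine (measure_mono ?_).trans hle
    rintro r ⟨hr, hr'⟩
    exact ⟨⟨by simpa using hpos r hr', hr, Ioo_subset_Icc_self hr'⟩, hr'⟩

/-- Near `1` the weight is a continuous function times `(1 - r) ^ α`, with `-1 < α`. -/
lemma integrableOn_weight {α : ℝ} (hα : -1 < α) {M : ℝ → ℝ} (hM : ContinuousOn M (Icc 0 1)) :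
    IntegrableOn (fun r : ℝ => M r * (1 - r ^ 2) ^ α) (Ioo 0 1) := by
  have h1 : IntervalIntegrable (fun x : ℝ => (1 - x) ^ α) volume 0 1 := by
    simpa using ((intervalIntegral.intervalIntegrable_rpow' (a := 0) (b := 1) hα).comp_sub_left
      1).symm
  rw [intervalIntegrable_iff_integrableOn_Icc_of_le zero_le_one] at h1
  have h2 : ContinuousOn (fun r : ℝ => M r * (1 + r) ^ α) (Icc 0 1) := by
    refine hM.mul (ContinuousOn.rpow_const (by fun_prop) fun r hr => Or.inl ?_)
    linarith [hr.1]
  have h3 := (h1.continuousOn_mul h2 isCompact_Icc).mono_set Ioo_subset_Icc_self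
  refine h3.congr_fun (fun r hr => ?_) measurableSet_Ioo
  have : (1 - r ^ 2 : ℝ) = (1 + r) * (1 - r) := by ring
  simp only [this]
  rw [Real.mul_rpow (by linarith [hr.1]) (by linarith [hr.2])]
  ring

/-- The quotient `(1 - M r) / (1 - r ^ 2)`, given at `r = 1` its limit `M'(1) / 2` (the limit when
`M 1 = 1`); `M'` is the derivative within `[0,1]`. -/
noncomputable def boundaryQuotient (M : ℝ → ℝ) : ℝ → ℝ :=
  Function.update (fun r => (1 - M r) / (1 - r ^ 2)) 1 (derivWithin M (Icc 0 1) 1 / 2)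

lemma continuousOn_boundaryQuotient {M : ℝ → ℝ} (hM : DifferentiableOn ℝ M (Icc 0 1))
    (hM1 : M 1 = 1) : ContinuousOn (boundaryQuotient M) (Icc 0 1) := by
  unfold boundaryQuotient
  rw [continuousOn_update_iff]
  refine ⟨?_, fun _ => ?_⟩
  · refine ((continuousOn_const.sub hM.continuousOn).mono sdiff_subset).div (by fun_prop) ?_
    rintro r ⟨hr, hne⟩
    have : r < 1 := lt_of_le_of_ne hr.2 hne
    nlinarith [hr.1]
  · have hd := (hM 1 (by simp)).hasDerivWithinAt
    rw [hasDerivWithinAt_iff_tendsto_slope] at hd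
    have h2 : Tendsto (fun r : ℝ => 1 + r) (𝓝[Icc 0 1 \ {1}] 1) (𝓝 2) := by
      refine (Continuous.tendsto' (by fun_prop) _ _ (by norm_num)).mono_left nhdsWithin_le_nhds
    refine (hd.div h2 two_ne_zero).congr' ?_
    filter_upwards [self_mem_nhdsWithin] with r hr
    have h1 : r - 1 ≠ 0 := sub_ne_zero.2 hr.2
    have h3 : 1 + r ≠ 0 := by linarith [hr.1.1]
    have h4 : (1 - r ^ 2 : ℝ) ≠ 0 := by
      rw [show (1 - r ^ 2 : ℝ) = -((r - 1) * (1 + r)) by ring]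
      exact neg_ne_zero.2 (mul_ne_zero h1 h3)
    simp only [Pi.div_apply, slope_def_field, hM1]
    field_simp
    ring

/-- The function `h` with `[(1 - M)(1 - r²)^{α+1}]″ = (1 - r²)^α h` on `(0,1)`, written so that it
is continuous on `[0,1]`. -/
noncomputable def secondDerivFactor (α : ℝ) (M : ℝ → ℝ) (r : ℝ) : ℝ :=
  -derivWithin (derivWithin M (Icc 0 1)) (Icc 0 1) r * (1 - r ^ 2)
    + 4 * (α + 1) * r * derivWithin M (Icc 0 1) r
    - 2 * (α + 1) * (1 - M r) + 4 * α * (α + 1) * r ^ 2 * boundaryQuotient M r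

lemma secondDeriv_eq (α : ℝ) {M : ℝ → ℝ} (hM : ContDiffOn ℝ 2 M (Icc 0 1))
    {r : ℝ} (hr : r ∈ Ioo (0:ℝ) 1) :
    derivWithin (derivWithin (fun s => (1 - M s) * (1 - s ^ 2) ^ (α + 1)) (Icc 0 1)) (Icc 0 1) r
      = (1 - r ^ 2) ^ α * secondDerivFactor α M r := by
  have hud : UniqueDiffOn ℝ (Icc (0:ℝ) 1) := uniqueDiffOn_Icc_zero_one
  have hM' : ContDiffOn ℝ 1 (derivWithin M (Icc 0 1)) (Icc 0 1) := hM.derivWithin hud (by norm_num)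
  have hnhds : ∀ s ∈ Ioo (0:ℝ) 1, Icc (0:ℝ) 1 ∈ 𝓝 s := fun s hs => Icc_mem_nhds hs.1 hs.2
  have hd1 : ∀ s ∈ Ioo (0:ℝ) 1, HasDerivAt M (derivWithin M (Icc 0 1) s) s := fun s hs =>
    ((hM.differentiableOn (by norm_num)) s (Ioo_subset_Icc_self hs)).hasDerivWithinAt.hasDerivAt
      (hnhds s hs)
  have hd2 : HasDerivAt (derivWithin M (Icc 0 1))
      (derivWithin (derivWithin M (Icc 0 1)) (Icc 0 1) r) r :=
    ((hM'.differentiableOn (by norm_num)) r (Ioo_subset_Icc_self hr)).hasDerivWithinAt.hasDerivAt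
      (hnhds r hr)
  have hposs : ∀ s ∈ Ioo (0:ℝ) 1, (0:ℝ) < 1 - s ^ 2 := fun s hs => by nlinarith [hs.1, hs.2]
  have hpow : ∀ p : ℝ, ∀ s ∈ Ioo (0:ℝ) 1,
      HasDerivAt (fun s : ℝ => (1 - s ^ 2) ^ p) (-(2 * s) * p * (1 - s ^ 2) ^ (p - 1)) s := by
    intro p s hs
    have h : HasDerivAt (fun s : ℝ => 1 - s ^ 2) (-(2 * s)) s := by
      simpa using (hasDerivAt_pow 2 s).const_sub 1
    exact h.rpow_const (Or.inl (hposs s hs).ne')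
  have hfirst : ∀ s ∈ Ioo (0:ℝ) 1,
      derivWithin (fun s => (1 - M s) * (1 - s ^ 2) ^ (α + 1)) (Icc 0 1) s
        = -derivWithin M (Icc 0 1) s * (1 - s ^ 2) ^ (α + 1)
          + (1 - M s) * (-(2 * s) * (α + 1) * (1 - s ^ 2) ^ α) := by
    intro s hs
    rw [derivWithin_of_mem_nhds (hnhds s hs)]
    have h := (((hd1 s hs).const_sub 1).mul (hpow (α + 1) s hs)).deriv
    rw [add_sub_cancel_right] at h
    exact h
  rw [derivWithin_of_mem_nhds (hnhds r hr),
    (Filter.eventuallyEq_of_mem (Ioo_mem_nhds hr.1 hr.2) hfirst).deriv_eq]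
  have hlin : HasDerivAt (fun s : ℝ => -(2 * s) * (α + 1)) (-2 * (α + 1)) r := by
    simpa using (((hasDerivAt_id r).const_mul 2).neg.mul_const (α + 1))
  have h := ((hd2.neg.mul (hpow (α + 1) r hr)).add
    (((hd1 r hr).const_sub 1).mul (hlin.mul (hpow α r hr)))).deriv
  refine Eq.trans h ?_
  have hp := hposs r hr
  have e1 : (1 - r ^ 2) ^ (α + 1) = (1 - r ^ 2) ^ α * (1 - r ^ 2) := Real.rpow_add_one hp.ne' α
  have e2 : (1 - r ^ 2) ^ (α - 1) = (1 - r ^ 2) ^ α / (1 - r ^ 2) := Real.rpow_sub_one hp.ne' α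
  simp only [Pi.neg_apply, Pi.mul_apply, add_sub_cancel_right, e1, e2,
    secondDerivFactor, boundaryQuotient, Function.update_of_ne hr.2.ne]
  field_simp
  ring

/-- `lim_{n→∞} C₃(n)C₄(n)/A(n) = 2(α+2)(α+1) M′(1)`, where
`C₃(n) = ∫₀¹ r^{2n+1} [(1−M(r))(1−r²)^{α+1}]″ dr`,
`C₄(n) = ∫₀¹ r^{2n+1} M(r)(1−r²)^α dr`, and
`A(n) = (∫₀¹ r^{2n+1} M(r)(1−r²)^α dr)·(∫₀¹ r^{2n−1} M(r)(1−r²)^α dr)`. -/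
theorem stmt12 (α : ℝ) (hα : -1 < α) (M : ℝ → ℝ)
    (hM : ContDiffOn ℝ 2 M (Set.Icc 0 1))
    (hMpos : ∀ r ∈ Set.Icc (0:ℝ) 1, 0 < M r) (hM1 : M 1 = 1) :
    Filter.Tendsto (fun n : ℕ =>
      ((∫ r in Set.Ioo (0:ℝ) 1, r ^ (2 * n + 1) *
          derivWithin
            (derivWithin (fun s => (1 - M s) * (1 - s ^ 2) ^ (α + 1)) (Set.Icc 0 1))
            (Set.Icc 0 1) r) *
       (∫ r in Set.Ioo (0:ℝ) 1, r ^ (2 * n + 1) * (M r * (1 - r ^ 2) ^ α))) /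
      ((∫ r in Set.Ioo (0:ℝ) 1, r ^ (2 * n + 1) * (M r * (1 - r ^ 2) ^ α)) *
       (∫ r in Set.Ioo (0:ℝ) 1, r ^ (2 * n - 1) * (M r * (1 - r ^ 2) ^ α))))
      Filter.atTop
      (nhds (2 * (α + 2) * (α + 1) * derivWithin M (Set.Icc 0 1) 1)) := by
  have hud : UniqueDiffOn ℝ (Icc (0:ℝ) 1) := uniqueDiffOn_Icc_zero_one
  have hM' : ContDiffOn ℝ 1 (derivWithin M (Icc 0 1)) (Icc 0 1) := hM.derivWithin hud (by norm_num)
  have hM'' := hM'.continuousOn_derivWithin hud le_rfl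
  have hw := integrableOn_weight hα hM.continuousOn
  have hpos : ∀ r ∈ Ioo (0:ℝ) 1, 0 < M r * (1 - r ^ 2) ^ α := fun r hr =>
    mul_pos (hMpos r (Ioo_subset_Icc_self hr))
      (Real.rpow_pos_of_pos (by nlinarith [hr.1, hr.2]) α)
  have hq := continuousOn_boundaryQuotient (hM.differentiableOn (by norm_num)) hM1
  have hh : ContinuousOn (secondDerivFactor α M) (Icc 0 1) := by
    have := hM.continuousOn
    have := hM'.continuousOn
    unfold secondDerivFactor
    fun_prop
  have hg : ContinuousOn (fun r => r ^ 2 * secondDerivFactor α M r / M r) (Icc 0 1) :=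
    ((continuousOn_pow 2).mul hh).div hM.continuousOn fun r hr => (hMpos r hr).ne'
  -- The exponent `2 * n - 1` is a truncated subtraction, harmless once `1 ≤ n`.
  have key := (tendsto_pow_weight_average hw hpos hg).comp
    (tendsto_atTop_mono (fun n : ℕ => (by omega : n - 1 ≤ 2 * n - 1)) (tendsto_sub_atTop_nat 1))
  have hval : (1:ℝ) ^ 2 * secondDerivFactor α M 1 / M 1
      = 2 * (α + 2) * (α + 1) * derivWithin M (Icc 0 1) 1 := by
    simp only [secondDerivFactor, boundaryQuotient, Function.update_self, hM1]
    ring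
  rw [hval] at key
  refine key.congr' ?_
  filter_upwards [eventually_ge_atTop 1] with n hn
  rw [mul_comm (∫ r in Ioo (0:ℝ) 1, r ^ (2 * n + 1) * derivWithin _ _ r),
    mul_div_mul_left _ _ (pow_weight_integral_pos hw hpos (2 * n + 1)).ne']
  simp only [Function.comp_apply]
  congr 1
  refine setIntegral_congr_fun measurableSet_Ioo fun r hr => ?_
  have hMr := (hMpos r (Ioo_subset_Icc_self hr)).ne'
  simp only [secondDeriv_eq α hM hr]
  rw [show 2 * n + 1 = (2 * n - 1) + 2 by omega, pow_add]
  field_simp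
end
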